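/- Let β ∈ (1/2,1), T > 0, x₀ > 0, and suppose f satisfies assumptions (i), (ii) and (iii). Let (Ω, F, P) be a probability space and let B : Ω × [0,T] → ℝ be a stochastic process such that almost every sample path t ↦ B_t(ω) is β-Hölder continuous with B_0(ω) = 0, the random variable ω ↦ ‖B(ω)‖_{0,T,β} is measurable, and for some γ > 2 and every c > 0, E[exp(c ‖B‖_{0,T,β}^{γ/(β(γ−1))})] < ∞. For each such ω let X(ω) be the unique positive continuous solution of X_t = x₀ + ∫₀ᵗ f(s, X_s) ds + B_t(ω) on [0,T], and assume ω ↦ ‖X(ω)‖_{0,T,∞} is measurable. Then E[‖X‖_{0,T,∞}^p] < ∞ for every p ≥ 1. -/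

import Mathlib

/-!
The singular drift only pushes the path away from `0`, so it cannot hurt an upper bound. Put
`c = max x₀ 1`, fix `t ∈ [0, T]`, and let `s ≤ t` be the last time with `X s ≤ c`. On `(s, t]` the
path stays above `1`, where `f(r, X r) ≤ 2 h(r) ≤ 2M`; hence
`X t = X s + ∫ₛᵗ f(r, X r) dr + B t - B s ≤ c + 2MT + T^β ‖B‖_β`.
So the supremum norm of `X` grows at most linearly in the Hölder seminorm of `B`
(`supNorm_le_of_solution`). Since every power of `y ≥ 0` is dominated by a multiple of
`exp (y ^ q)`, `q > 0`, the exponential moment of the seminorm bounds all moments of the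
supremum norm.
-/

open Set MeasureTheory Filter

/-- The supremum norm `‖x‖_{s,t,∞} = sup {|x r| : s ≤ r ≤ t}`. -/
noncomputable def supNorm (x : ℝ → ℝ) (s t : ℝ) : ℝ :=
  sSup ((fun r => |x r|) '' Set.Icc s t)

/-- The `β`-Hölder seminorm `‖x‖_{s,t,β} = sup {|x u − x v|/|u−v|^β : s ≤ u, v ≤ t, u ≠ v}`. -/
noncomputable def holderNorm (β : ℝ) (x : ℝ → ℝ) (s t : ℝ) : ℝ :=
  sSup {c : ℝ | ∃ u ∈ Set.Icc s t, ∃ v ∈ Set.Icc s t, u ≠ v ∧ c = |x u - x v| / |u - v| ^ β}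

theorem holderNorm_nonneg (β : ℝ) (x : ℝ → ℝ) (s t : ℝ) : 0 ≤ holderNorm β x s t := by
  apply Real.sSup_nonneg
  rintro c ⟨u, _, v, _, _, rfl⟩
  positivity

theorem supNorm_nonneg (x : ℝ → ℝ) (s t : ℝ) : 0 ≤ supNorm x s t := by
  apply Real.sSup_nonneg
  rintro c ⟨u, _, rfl⟩
  positivity

/-- For a Hölder continuous path the supremum defining the seminorm is finite, so the seminorm
is itself an admissible Hölder constant. -/
theorem abs_sub_le_holderNorm_mul {β : ℝ} {x : ℝ → ℝ} {a b C : ℝ}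
    (hC : ∀ u ∈ Set.Icc a b, ∀ v ∈ Set.Icc a b, |x u - x v| ≤ C * |u - v| ^ β)
    {u v : ℝ} (hu : u ∈ Set.Icc a b) (hv : v ∈ Set.Icc a b) (huv : u ≠ v) :
    |x u - x v| ≤ holderNorm β x a b * |u - v| ^ β := by
  have hpos : ∀ {u v : ℝ}, u ≠ v → 0 < |u - v| ^ β := fun h =>
    Real.rpow_pos_of_pos (abs_pos.2 (sub_ne_zero.2 h)) β
  rw [← div_le_iff₀ (hpos huv)]
  refine le_csSup ⟨C, ?_⟩ ⟨u, hu, v, hv, huv, rfl⟩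
  rintro c ⟨u, hu, v, hv, huv, rfl⟩
  rw [div_le_iff₀ (hpos huv)]
  exact hC u hu v hv

/-- Pathwise estimate: a positive continuous solution is bounded linearly in the Hölder seminorm
of the driving path. -/
theorem supNorm_le_of_solution {β T x₀ M : ℝ} (hβ : 0 < β) (hT : 0 < T)
    {f : ℝ → ℝ → ℝ} {h B X : ℝ → ℝ}
    (hf_nonneg : ∀ t ≥ (0:ℝ), ∀ x > (0:ℝ), 0 ≤ f t x)
    (hf_cont : ContinuousOn (fun p : ℝ × ℝ => f p.1 p.2) (Set.Ici 0 ×ˢ Set.Ioi 0))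
    (hM : ∀ t ∈ Set.Icc (0:ℝ) T, h t ≤ M) (hM0 : 0 ≤ M)
    (hupper : ∀ t ≥ (0:ℝ), ∀ x > (0:ℝ), f t x ≤ h t * (1 + 1/x))
    (hB0 : B 0 = 0)
    (hB : ∃ C : ℝ, ∀ u ∈ Set.Icc (0:ℝ) T, ∀ v ∈ Set.Icc (0:ℝ) T,
        |B u - B v| ≤ C * |u - v| ^ β)
    (hXc : ContinuousOn X (Set.Icc 0 T))
    (hXpos : ∀ t ∈ Set.Icc (0:ℝ) T, 0 < X t)
    (hX : ∀ t ∈ Set.Icc (0:ℝ) T, X t = x₀ + (∫ s in (0:ℝ)..t, f s (X s)) + B t) :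
    supNorm X 0 T ≤ max x₀ 1 + 2 * M * T + T ^ β * holderNorm β B 0 T := by
  obtain ⟨C, hC⟩ := hB
  have hN := holderNorm_nonneg β B 0 T
  refine csSup_le (Set.Nonempty.image _ ⟨0, Set.left_mem_Icc.2 hT.le⟩) ?_
  rintro _ ⟨t, ht, rfl⟩
  simp only [abs_of_pos (hXpos t ht)]
  have hsub : Set.Icc 0 t ⊆ Set.Icc 0 T := Set.Icc_subset_Icc_right ht.2
  have hX0 : X 0 = x₀ := by
    rw [hX 0 (Set.left_mem_Icc.2 hT.le)]; simp [hB0]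
  -- the last time `s ≤ t` at which the path is at most `max x₀ 1`
  obtain ⟨s, ⟨hs, hsX⟩, hsmax⟩ :
      ∃ s, IsGreatest (Set.Icc 0 t ∩ X ⁻¹' Set.Iic (max x₀ 1)) s := by
    refine IsCompact.exists_isGreatest ?_ ⟨0, Set.left_mem_Icc.2 ht.1, ?_⟩
    · exact isCompact_Icc.of_isClosed_subset
        ((hXc.mono hsub).preimage_isClosed_of_isClosed isClosed_Icc isClosed_Iic)
        Set.inter_subset_left
    · simp [hX0]
  have hsX' : X s ≤ max x₀ 1 := hsX
  have hcont : ContinuousOn (fun r => f r (X r)) (Set.Icc 0 T) :=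
    hf_cont.comp (f := fun r => (r, X r)) (continuousOn_id.prodMk hXc)
      (fun r hr => ⟨hr.1, hXpos r hr⟩)
  have hint : ∀ r ∈ Set.Icc 0 T, IntervalIntegrable (fun r => f r (X r)) volume 0 r := by
    intro r hr
    apply ContinuousOn.intervalIntegrable
    rw [Set.uIcc_of_le hr.1]
    exact hcont.mono (Set.Icc_subset_Icc_right hr.2)
  have hsplit := intervalIntegral.integral_interval_sub_left (hint t ht) (hint s (hsub hs))
  have hdrift : ∫ r in s..t, f r (X r) ≤ 2 * M * T := by
    have hle : ‖∫ r in s..t, f r (X r)‖ ≤ 2 * M * |t - s| := by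
      apply intervalIntegral.norm_integral_le_of_norm_le_const
      intro r hr
      rw [Set.uIoc_of_le hs.2] at hr
      have hr0 : 0 ≤ r := hs.1.trans hr.1.le
      have hrT : r ∈ Set.Icc 0 T := ⟨hr0, hr.2.trans ht.2⟩
      have hXr : 1 ≤ X r := by
        by_contra! hlt
        exact hr.1.not_ge (hsmax ⟨⟨hr0, hr.2⟩, hlt.le.trans (le_max_right _ _)⟩)
      rw [Real.norm_of_nonneg (hf_nonneg r hr0 _ (hXpos r hrT))]
      have h1 : 1 / X r ≤ 1 := (div_le_one (by linarith)).2 hXr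
      have h2 : 0 ≤ 1 / X r := by positivity
      calc f r (X r) ≤ h r * (1 + 1 / X r) := hupper r hr0 _ (hXpos r hrT)
        _ ≤ M * (1 + 1 / X r) := by gcongr; exact hM r hrT
        _ ≤ 2 * M := by nlinarith
    rw [abs_of_nonneg (sub_nonneg.2 hs.2)] at hle
    calc _ ≤ 2 * M * (t - s) := (Real.le_norm_self _).trans hle
      _ ≤ 2 * M * T := by gcongr; linarith [hs.1, ht.2]
  have hnoise : B t - B s ≤ T ^ β * holderNorm β B 0 T := by
    rcases eq_or_ne t s with rfl | hne
    · rw [sub_self]; positivity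
    calc B t - B s ≤ |B t - B s| := le_abs_self _
      _ ≤ holderNorm β B 0 T * |t - s| ^ β := abs_sub_le_holderNorm_mul hC ht (hsub hs) hne
      _ ≤ holderNorm β B 0 T * T ^ β := by
          rw [abs_of_nonneg (sub_nonneg.2 hs.2)]
          gcongr
          · exact sub_nonneg.2 hs.2
          · linarith [hs.1, ht.2]
      _ = _ := mul_comm _ _
  linarith [hX t ht, hX s (hsub hs)]

theorem add_rpow_le_two_mul_rpow_add {a b p : ℝ} (ha : 0 ≤ a) (hb : 0 ≤ b) (hp : 0 ≤ p) :
    (a + b) ^ p ≤ (2 * a) ^ p + (2 * b) ^ p := by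
  rcases le_total a b with hab | hab
  · have : (a + b) ^ p ≤ (2 * b) ^ p := by gcongr; linarith
    have : 0 ≤ (2 * a) ^ p := by positivity
    linarith
  · have : (a + b) ^ p ≤ (2 * a) ^ p := by gcongr; linarith
    have : 0 ≤ (2 * b) ^ p := by positivity
    linarith

/-- Every power of `y ≥ 0` is dominated by a multiple of `exp (y ^ q)`. -/
theorem exists_rpow_le_mul_exp_rpow {p q : ℝ} (hp : 0 ≤ p) (hq : 0 < q) :
    ∃ C : ℝ, ∀ y : ℝ, 0 ≤ y → y ^ p ≤ C * Real.exp (1 * y ^ q) := by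
  refine ⟨(p / q / |1|) ^ (p / q), fun y hy => ?_⟩
  have h1 := ProbabilityTheory.rpow_abs_le_mul_exp_abs (y ^ q) (p := p / q) (t := 1)
    (by positivity) one_ne_zero
  rw [abs_of_nonneg (Real.rpow_nonneg hy q), ← Real.rpow_mul hy, mul_div_cancel₀ _ hq.ne'] at h1
  simpa using h1

/-- **moments of all orders.**  Let `β ∈ (1/2,1)`, `T > 0`, `x₀ > 0`, and
let `f` satisfy assumptions (i)–(iii).  Let `B` be a stochastic process on a probability
space `(Ω, P)` whose sample paths are a.s. `β`-Hölder continuous on `[0,T]` with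
`B 0 = 0`, such that `ω ↦ ‖B ω‖_{0,T,β}` is measurable and, for some `γ > 2`,
`E[exp(c ‖B‖_{0,T,β}^{γ/(β(γ−1))})] < ∞` for every `c > 0`.  If `X ω` is (a.s.) the
positive continuous solution of `X t = x₀ + ∫₀ᵗ f(s, X s) ds + B t` on `[0,T]` and
`ω ↦ ‖X ω‖_{0,T,∞}` is measurable, then `E[‖X‖_{0,T,∞}^p] < ∞` for every `p ≥ 1`. -/
theorem singular_sde_moments
    (β : ℝ) (hβ : β ∈ Set.Ioo (1/2 : ℝ) 1)
    (T : ℝ) (hT : 0 < T)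
    (x₀ : ℝ) (hx₀ : 0 < x₀)
    (f f' : ℝ → ℝ → ℝ) (g h : ℝ → ℝ) (x₁ α : ℝ)
    -- assumption (i)
    (hf_nonneg : ∀ t ≥ (0:ℝ), ∀ x > (0:ℝ), 0 ≤ f t x)
    (hf_cont : ContinuousOn (fun p : ℝ × ℝ => f p.1 p.2) (Set.Ici 0 ×ˢ Set.Ioi 0))
    (hderiv : ∀ t ≥ (0:ℝ), ∀ x > (0:ℝ), HasDerivAt (fun y => f t y) (f' t x) x)
    (hf'_cont : ContinuousOn (fun p : ℝ × ℝ => f' p.1 p.2) (Set.Ici 0 ×ˢ Set.Ioi 0))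
    (hf'_nonpos : ∀ t > (0:ℝ), ∀ x > (0:ℝ), f' t x ≤ 0)
    -- assumption (ii)
    (hx₁ : 0 < x₁) (hα : 1/β - 1 < α)
    (hg_nonneg : ∀ t ≥ (0:ℝ), 0 ≤ g t)
    (hg_cont : ContinuousOn g (Set.Ici 0))
    (hg_pos : ∀ t > (0:ℝ), 0 < g t)
    (hlower : ∀ t ≥ (0:ℝ), ∀ x : ℝ, 0 < x → x < x₁ → g t * x ^ (-α) ≤ f t x)
    -- assumption (iii)
    (hh_nonneg : ∀ t ≥ (0:ℝ), 0 ≤ h t)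
    (hh_locbdd : ∀ T' > (0:ℝ), ∃ M : ℝ, ∀ t ∈ Set.Icc (0:ℝ) T', h t ≤ M)
    (hupper : ∀ t ≥ (0:ℝ), ∀ x > (0:ℝ), f t x ≤ h t * (1 + 1/x))
    -- the probability space and the driving process
    {Ω : Type*} [MeasurableSpace Ω] (P : Measure Ω) [IsProbabilityMeasure P]
    (B : Ω → ℝ → ℝ)
    (hB_path : ∀ᵐ ω ∂P, B ω 0 = 0 ∧
      ∃ C : ℝ, ∀ u ∈ Set.Icc (0:ℝ) T, ∀ v ∈ Set.Icc (0:ℝ) T,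
        |B ω u - B ω v| ≤ C * |u - v| ^ β)
    (hB_meas : Measurable fun ω => holderNorm β (B ω) 0 T)
    (γ : ℝ) (hγ : 2 < γ)
    (hB_exp : ∀ c > (0:ℝ),
      Integrable (fun ω =>
        Real.exp (c * holderNorm β (B ω) 0 T ^ (γ / (β * (γ - 1))))) P)
    -- the solution process
    (X : Ω → ℝ → ℝ)
    (hX_sol : ∀ᵐ ω ∂P,
      ContinuousOn (X ω) (Set.Icc 0 T) ∧
      (∀ t ∈ Set.Icc (0:ℝ) T, 0 < X ω t) ∧
      (∀ t ∈ Set.Icc (0:ℝ) T, X ω t = x₀ + (∫ s in (0:ℝ)..t, f s (X ω s)) + B ω t))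
    (hX_meas : Measurable fun ω => supNorm (X ω) 0 T) :
    ∀ p : ℝ, 1 ≤ p → Integrable (fun ω => supNorm (X ω) 0 T ^ p) P := by
  intro p hp
  have hβ0 : 0 < β := by linarith [hβ.1]
  have hq : 0 < γ / (β * (γ - 1)) :=
    div_pos (by linarith) (mul_pos hβ0 (by linarith))
  obtain ⟨M, hM⟩ := hh_locbdd T hT
  have hM0 : 0 ≤ M := (hh_nonneg 0 le_rfl).trans (hM 0 ⟨le_rfl, hT.le⟩)
  obtain ⟨C, hC⟩ := exists_rpow_le_mul_exp_rpow (by linarith : 0 ≤ p) hq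
  have hdom := ((hB_exp 1 one_pos).const_mul C).const_mul ((2 * T ^ β) ^ p)
  refine ((integrable_const ((2 * (max x₀ 1 + 2 * M * T)) ^ p)).add hdom).mono'
    (hX_meas.pow_const p).aestronglyMeasurable ?_
  filter_upwards [hB_path, hX_sol] with ω hBω hXω
  have hN := holderNorm_nonneg β (B ω) 0 T
  have hbound := supNorm_le_of_solution hβ0 hT hf_nonneg hf_cont hM hM0 hupper hBω.1 hBω.2
    hXω.1 hXω.2.1 hXω.2.2
  have hsup := supNorm_nonneg (X ω) 0 T
  rw [Real.norm_of_nonneg (Real.rpow_nonneg hsup p)]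
  simp only [Pi.add_apply]
  calc supNorm (X ω) 0 T ^ p
      ≤ (max x₀ 1 + 2 * M * T + T ^ β * holderNorm β (B ω) 0 T) ^ p := by gcongr
    _ ≤ (2 * (max x₀ 1 + 2 * M * T)) ^ p + (2 * (T ^ β * holderNorm β (B ω) 0 T)) ^ p :=
        add_rpow_le_two_mul_rpow_add (by positivity) (by positivity) (by linarith)
    _ ≤ _ := by
        rw [← mul_assoc, Real.mul_rpow (by positivity) hN]
        gcongr
        exact hC _ hN
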